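/- Let r ≥ 4 be an integer, and let f ∈ L^r_{∞,∞} be non-constant. Set α = M_r(f), b = M_{r−1}(f)/M_r(f), and a = M_{r−2}(f)/M_{r−1}(f) − M_{r−1}(f)/(2·M_r(f)); then a ≥ 0 (this follows from Landau's inequality M_{r−1}(f)² ≤ 2·M_{r−2}(f)·M_r(f)). For β ≥ 0 let g_β = α·ψ_r(a,b,β). Then α, b > 0, and for every β ≥ 0 one has M_{r−2}(g_β) = M_{r−2}(f), M_{r−1}(g_β) = M_{r−1}(f) and M_r(g_β) = M_r(f); moreover, for every integer s with 0 ≤ s < r−2, the function β ↦ M_s(g_β) is continuous, increasing, and tends to ∞ as β → ∞. -/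

import Mathlib

open MeasureTheory Filter

noncomputable section

/-- The uniform norm `‖f‖ = sup_{t ∈ ℝ} |f t|` of a function `f : ℝ → ℝ`. -/
def unif (f : ℝ → ℝ) : ℝ := ⨆ t : ℝ, |f t|

/-- `M k f = ‖f⁽ᵏ⁾‖`, the uniform norm of the `k`-th derivative of `f`. -/
def M (k : ℕ) (f : ℝ → ℝ) : ℝ := unif (iteratedDeriv k f)

/-- The class `L^r_{∞,∞}`: bounded functions `f : ℝ → ℝ` having `r-1` (continuous)
derivatives, with `f⁽ʳ⁻¹⁾` locally absolutely continuous and `f⁽ʳ⁾` essentially bounded;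
the last two conditions are equivalent to `f⁽ʳ⁻¹⁾` being Lipschitz. -/
def MemL (r : ℕ) (f : ℝ → ℝ) : Prop :=
  Continuous f ∧ (∃ C : ℝ, ∀ t : ℝ, |f t| ≤ C) ∧ ContDiff ℝ (r - 1 : ℕ) f ∧
    ∃ K : NNReal, LipschitzWith K (iteratedDeriv (r - 1) f)

/-- The Euler perfect spline `φ_r`: the `r`-th `2π`-periodic antiderivative with zero
mean value of `t ↦ sgn (sin t)`. -/
def eulerPhi : ℕ → ℝ → ℝ
  | 0 => fun t => Real.sign (Real.sin t)
  | (s + 1) => fun t =>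
      (∫ x in (0:ℝ)..t, eulerPhi s x) -
        (1 / (2 * Real.pi)) * ∫ x in (0:ℝ)..(2 * Real.pi), ∫ u in (0:ℝ)..x, eulerPhi s u

/-- `φ_{λ,r}(t) = λ^{-r} φ_r (λ t)`. -/
def eulerPhiL (lam : ℝ) (r : ℕ) (t : ℝ) : ℝ := lam ^ (-(r : ℤ)) * eulerPhi r (lam * t)

/-- The basic step function: `0` on `[0,a]`, `1` on `(a, a+b]`, `0` after `a+b`. -/
def psiBase (a b : ℝ) (t : ℝ) : ℝ := if t ≤ a then 0 else if t ≤ a + b then 1 else 0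

/-- `psiBase` continued evenly with respect to the point `a+b+c`. -/
def psiHalf (a b c t : ℝ) : ℝ :=
  if t ≤ a + b + c then psiBase a b t else psiBase a b (2 * (a + b + c) - t)

/-- The Rodov step function `ψ_0(a,b,c)`: equal to `psiBase` on `[0, a+b+c]`, continued
evenly with respect to `a+b+c`, then oddly with respect to `2(a+b+c)`, then
`4(a+b+c)`-periodically. -/
def psiZero (a b c t : ℝ) : ℝ :=
  if (t - 4 * (a + b + c) * ⌊t / (4 * (a + b + c))⌋) ≤ 2 * (a + b + c) then
    psiHalf a b c (t - 4 * (a + b + c) * ⌊t / (4 * (a + b + c))⌋)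
  else
    -psiHalf a b c (4 * (a + b + c) - (t - 4 * (a + b + c) * ⌊t / (4 * (a + b + c))⌋))

/-- `ψ_s(a,b,c)`: the `s`-th periodic antiderivative of `ψ_0(a,b,c)` with zero mean
value over the period `[0, 4(a+b+c)]`. -/
def psi : ℕ → ℝ → ℝ → ℝ → ℝ → ℝ
  | 0 => psiZero
  | (s + 1) => fun a b c t =>
      (∫ x in (0:ℝ)..t, psi s a b c x) -
        (1 / (4 * (a + b + c))) *
          ∫ x in (0:ℝ)..(4 * (a + b + c)), ∫ u in (0:ℝ)..x, psi s a b c u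

/-- The modulus of continuity `ω(D^k, X; δ) = sup {‖f⁽ᵏ⁾‖ : f ∈ X, ‖f‖ ≤ δ}` of the
differentiation operator `D^k` on a class `X`. -/
def omegaMod (k : ℕ) (X : Set (ℝ → ℝ)) (δ : ℝ) : ℝ :=
  sSup {y : ℝ | ∃ f ∈ X, M 0 f ≤ δ ∧ M k f = y}

end

/-!
The inequality `a ≥ 0` is Landau's inequality for `f⁽ʳ⁻²⁾`: expanding `f⁽ʳ⁻²⁾` at `t ± h` bounds a
quadratic polynomial in `h` from below by `0`, and its discriminant is then nonpositive. That
`M_s(f) > 0` for `s ≥ 1` follows from the same inequality, since a bounded function whose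
derivative is constant has zero derivative.

Put `L = a + b + c` and `(T u)(t) = ∫_0^t u(L - x) dx`. The operator `T` preserves the oddness of
`ψ_0` and its symmetry about `L`, and the primitive it yields has zero mean, so that
`ψ_s(t + sL) = (T^s ψ_0)(t)`. On `[0, L]` the function `T^s ψ_0` is nonnegative, and monotone for
`s ≥ 1`, hence `‖ψ_s‖ = (T^s ψ_0)(L)`; this equals `b` for `s = 1` and `b (a + b / 2)` for `s = 2`.

For `s ≥ 2` the function `T^s ψ_0` is concave on `[0, L]` and vanishes at `0`, so it lies above its
chord, which gives `(L / 2) ‖ψ_s‖ ≤ ‖ψ_{s+1}‖` and therefore the growth in `c`. Strict monotonicity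
in `c` comes from comparing the iterates for `L` at `t` with those for `L + δ` at `t + δ`.
-/

lemma unif_nonneg (f : ℝ → ℝ) : 0 ≤ unif f := Real.iSup_nonneg fun _ => abs_nonneg _

lemma abs_le_unif {f : ℝ → ℝ} (hf : ∃ C, ∀ t, |f t| ≤ C) (t : ℝ) : |f t| ≤ unif f := by
  obtain ⟨C, hC⟩ := hf
  exact le_ciSup (f := fun t => |f t|) ⟨C, Set.forall_mem_range.2 hC⟩ t

lemma unif_eq_of_forall_le {f : ℝ → ℝ} {m t₀ : ℝ} (hle : ∀ t, |f t| ≤ m) (heq : |f t₀| = m) :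
    unif f = m :=
  le_antisymm (ciSup_le hle) (heq ▸ abs_le_unif ⟨m, hle⟩ t₀)

lemma unif_comp_add_right (f : ℝ → ℝ) (d : ℝ) : unif (fun t => f (t + d)) = unif f :=
  (Equiv.addRight d).iSup_comp (g := fun t => |f t|)

lemma M_const_mul (k : ℕ) (α : ℝ) (f : ℝ → ℝ) : M k (fun t => α * f t) = |α| * M k f := by
  simp only [M, unif, Real.mul_iSup_of_nonneg (abs_nonneg α), ← abs_mul,
    iteratedDeriv_const_mul_field]

lemma lipschitzWith_unif_deriv {v : ℝ → ℝ} {K : NNReal} (hv : LipschitzWith K v) :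
    LipschitzWith (unif (deriv v)).toNNReal v := by
  refine LipschitzWith.of_dist_le_mul fun x y => ?_
  have hac : AbsolutelyContinuousOnInterval v y x :=
    hv.lipschitzOnWith.absolutelyContinuousOnInterval
  rw [Real.coe_toNNReal _ (unif_nonneg _), Real.dist_eq, Real.dist_eq, ← hac.integral_deriv_eq_sub]
  exact intervalIntegral.norm_integral_le_of_norm_le_const (f := deriv v) fun t _ =>
    abs_le_unif (f := deriv v) ⟨K, fun _ => norm_deriv_le_of_lipschitz hv⟩ t

lemma lipschitzWith_of_abs_hasDerivAt_le {w w' : ℝ → ℝ} {C : ℝ} (hw : ∀ t, HasDerivAt w (w' t) t)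
    (hC : ∀ t, |w' t| ≤ C) : LipschitzWith C.toNNReal w := by
  refine lipschitzWith_of_nnnorm_deriv_le (fun t => (hw t).differentiableAt) fun t => ?_
  rw [(hw t).deriv, ← norm_toNNReal]
  exact Real.toNNReal_mono (hC t)

/-! ### Landau's inequality -/

section Landau

variable {u v : ℝ → ℝ} {D : NNReal}

lemma abs_symm_diff_sub_le (huv : ∀ t, HasDerivAt u (v t) t) (hv : LipschitzWith D v) (t h : ℝ) :
    |u (t + h) - u (t - h) - 2 * h * v t| ≤ D * h ^ 2 := by
  have hderiv (θ : ℝ) : HasDerivAt (fun θ => u (t + θ * h) - u (t - θ * h) - θ * (2 * h * v t))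
      (h * (v (t + θ * h) - v t) + h * (v (t - θ * h) - v t)) θ := by
    have hlin : HasDerivAt (fun θ => θ * h) h θ := hasDerivAt_mul_const h
    have hplus := (huv (t + θ * h)).comp θ (hlin.const_add t)
    have hminus := (huv (t - θ * h)).comp θ (hlin.const_sub t)
    exact ((hplus.sub hminus).sub (hasDerivAt_mul_const _)).congr_deriv (by ring)
  have hcont : Continuous fun θ => h * (v (t + θ * h) - v t) + h * (v (t - θ * h) - v t) := by
    have := hv.continuous
    fun_prop
  have hbound (θ : ℝ) (hθ : θ ∈ Set.Ioc 0 1) :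
      ‖h * (v (t + θ * h) - v t) + h * (v (t - θ * h) - v t)‖ ≤ 2 * D * h ^ 2 * θ := by
    have hnear (z : ℝ) (hz : |z - t| = θ * |h|) : |h * (v z - v t)| ≤ D * h ^ 2 * θ := by
      rw [abs_mul, ← sq_abs h]
      have := hv.dist_le_mul z t
      rw [Real.dist_eq, Real.dist_eq, hz] at this
      nlinarith [mul_le_mul_of_nonneg_left this (abs_nonneg h)]
    refine (abs_add_le _ _).trans ?_
    have hp := hnear (t + θ * h) (by simp [abs_mul, abs_of_pos hθ.1])
    have hm := hnear (t - θ * h) (by simp [abs_mul, abs_of_pos hθ.1])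
    linarith
  have hftc := intervalIntegral.integral_eq_sub_of_hasDerivAt (fun θ _ => hderiv θ)
    (hcont.intervalIntegrable 0 1)
  simp only [one_mul, zero_mul, add_zero, sub_zero, sub_self] at hftc
  rw [← hftc]
  refine (intervalIntegral.norm_integral_le_of_norm_le zero_le_one (ae_of_all _ hbound)
    (Continuous.intervalIntegrable (by fun_prop) _ _)).trans_eq ?_
  rw [intervalIntegral.integral_const_mul, integral_id]
  ring

lemma sq_deriv_le_of_lipschitzWith {A : ℝ} (hu : ∀ t, |u t| ≤ A)
    (huv : ∀ t, HasDerivAt u (v t) t) (hv : LipschitzWith D v) (t : ℝ) :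
    v t ^ 2 ≤ 2 * A * D := by
  have hquad (h : ℝ) : 0 ≤ D * (h * h) + -(2 * v t) * h + 2 * A := by
    have hdiff := (abs_le.1 (abs_symm_diff_sub_le huv hv t h)).1
    have hplus := (abs_le.1 (hu (t + h))).2
    have hminus := (abs_le.1 (hu (t - h))).1
    linarith
  have := discrim_le_zero hquad
  rw [discrim] at this
  linarith

end Landau

/-! ### Derivatives of functions in `L^r_{∞,∞}` -/

lemma hasDerivAt_iteratedDeriv {n : ℕ} {f : ℝ → ℝ} (hf : ContDiff ℝ (n + 1 : ℕ) f) (t : ℝ) :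
    HasDerivAt (iteratedDeriv n f) (iteratedDeriv (n + 1) f t) t := by
  rw [iteratedDeriv_succ]
  exact (hf.differentiable_iteratedDeriv n (by exact_mod_cast n.lt_succ_self) t).hasDerivAt

section ForwardDifference

variable {w w' : ℝ → ℝ} {K : NNReal}

lemma lipschitzWith_forward_diff (hw : ∀ t, HasDerivAt w (w' t) t) (hw' : LipschitzWith K w') :
    LipschitzWith K fun t => w (t + 1) - w t := by
  have hbound (t : ℝ) : |w' (t + 1) - w' t| ≤ K := by
    simpa [Real.dist_eq] using hw'.dist_le_mul (t + 1) t
  simpa using lipschitzWith_of_abs_hasDerivAt_le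
    (fun t => ((hw (t + 1)).comp_add_const t 1).fun_sub (hw t)) hbound

lemma exists_bound_of_forward_diff_bound (hw : ∀ t, HasDerivAt w (w' t) t)
    (hw' : LipschitzWith K w') (hdiff : ∃ B, ∀ t, |w (t + 1) - w t| ≤ B) :
    ∃ B, ∀ t, |w' t| ≤ B := by
  obtain ⟨B, hB⟩ := hdiff
  refine ⟨B + K, fun t => ?_⟩
  obtain ⟨ξ, hξ, hslope⟩ := exists_hasDerivAt_eq_slope w w' (lt_add_one t)
    (fun x _ => (hw x).continuousAt.continuousWithinAt) (fun x _ => hw x)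
  rw [add_sub_cancel_left, div_one] at hslope
  have hdist : |w' t - w' ξ| ≤ K := by
    have hlip := hw'.dist_le_mul t ξ
    have hone : dist t ξ ≤ 1 := abs_le.2 ⟨by linarith [hξ.2], by linarith [hξ.1]⟩
    exact hlip.trans (mul_le_of_le_one_right K.2 hone)
  calc |w' t| = |w' ξ + (w' t - w' ξ)| := by rw [add_sub_cancel]
    _ ≤ |w' ξ| + |w' t - w' ξ| := abs_add_le _ _
    _ ≤ B + K := add_le_add (hslope ▸ hB t) hdist

end ForwardDifference

lemma exists_bound_iteratedDeriv (n : ℕ) {f : ℝ → ℝ} (hf : ContDiff ℝ n f)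
    (hbdd : ∃ C, ∀ t, |f t| ≤ C) (hlip : ∃ K, LipschitzWith K (iteratedDeriv n f)) :
    ∃ B, ∀ t, |iteratedDeriv n f t| ≤ B := by
  induction n generalizing f with
  | zero => simpa using hbdd
  | succ n ih =>
    -- The induction hypothesis is applied to the forward difference `f (t + 1) - f t`.
    obtain ⟨C, hC⟩ := hbdd
    obtain ⟨K, hK⟩ := hlip
    have hfn : ContDiff ℝ n f := hf.of_le (by exact_mod_cast n.le_succ)
    have hshift : ContDiff ℝ n fun t => f (t + 1) := hfn.comp (by fun_prop)
    have hdiff : iteratedDeriv n (fun t => f (t + 1) - f t) =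
        fun t => iteratedDeriv n f (t + 1) - iteratedDeriv n f t := by
      funext t
      rw [iteratedDeriv_fun_sub hshift.contDiffAt hfn.contDiffAt, iteratedDeriv_comp_add_const]
    have hderiv := hasDerivAt_iteratedDeriv hf
    refine exists_bound_of_forward_diff_bound hderiv hK ?_
    simpa only [hdiff] using ih (hshift.sub hfn)
      ⟨C + C, fun t => (abs_sub _ _).trans (add_le_add (hC _) (hC _))⟩
      ⟨K, hdiff ▸ lipschitzWith_forward_diff hderiv hK⟩

lemma eq_of_iteratedDeriv_eq (n : ℕ) {f : ℝ → ℝ} (hf : ContDiff ℝ n f)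
    (hbdd : ∃ C, ∀ t, |f t| ≤ C) (hconst : ∀ x y, iteratedDeriv n f x = iteratedDeriv n f y)
    (x y : ℝ) : f x = f y := by
  induction n with
  | zero => simpa using hconst x y
  | succ n ih =>
    have hfn : ContDiff ℝ n f := hf.of_le (by exact_mod_cast n.le_succ)
    have hderiv := hasDerivAt_iteratedDeriv hf
    have hlip := lipschitzWith_of_abs_hasDerivAt_le hderiv fun t => (congrArg abs (hconst t 0)).le
    obtain ⟨B, hB⟩ := exists_bound_iteratedDeriv n hfn hbdd ⟨_, hlip⟩
    have hlip_zero : LipschitzWith 0 (iteratedDeriv (n + 1) f) :=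
      LipschitzWith.of_dist_le_mul fun x y => by simp [hconst x y]
    have hzero (t : ℝ) : iteratedDeriv (n + 1) f t = 0 := by
      have := sq_deriv_le_of_lipschitzWith hB hderiv hlip_zero t
      rw [NNReal.coe_zero, mul_zero] at this
      exact pow_eq_zero_iff two_ne_zero |>.1 (this.antisymm (sq_nonneg _))
    exact ih hfn (is_const_of_deriv_eq_zero (fun t => (hderiv t).differentiableAt)
      fun t => (hderiv t).deriv.trans (hzero t))

namespace MemL

variable {n : ℕ} {f : ℝ → ℝ}

lemma exists_bound (hf : MemL (n + 1) f) : ∃ C, ∀ t, |iteratedDeriv n f t| ≤ C :=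
  exists_bound_iteratedDeriv n hf.2.2.1 hf.2.1 hf.2.2.2

lemma of_succ (hf : MemL (n + 2) f) : MemL (n + 1) f := by
  obtain ⟨B, hB⟩ := hf.exists_bound
  obtain ⟨hcont, hbdd, hdiff, -⟩ := hf
  exact ⟨hcont, hbdd, hdiff.of_le (by exact_mod_cast n.le_succ), _,
    lipschitzWith_of_abs_hasDerivAt_le (hasDerivAt_iteratedDeriv hdiff) hB⟩

lemma lipschitzWith_M (hf : MemL (n + 1) f) :
    LipschitzWith (M (n + 1) f).toNNReal (iteratedDeriv n f) := by
  obtain ⟨-, -, -, K, hK⟩ := hf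
  rw [M, iteratedDeriv_succ]
  exact lipschitzWith_unif_deriv hK

lemma M_pos (hf : MemL (n + 1) f) (hnc : ∃ x y, f x ≠ f y) : 0 < M (n + 1) f := by
  refine (unif_nonneg _).lt_of_ne' fun hzero => ?_
  obtain ⟨x, y, hxy⟩ := hnc
  refine hxy (eq_of_iteratedDeriv_eq n hf.2.2.1 hf.2.1 (fun x y => ?_) x y)
  have := hf.lipschitzWith_M.dist_le_mul x y
  rw [M, hzero, Real.toNNReal_zero, NNReal.coe_zero, zero_mul] at this
  exact dist_le_zero.1 this

lemma landau (hf : MemL (n + 2) f) : M (n + 1) f ^ 2 ≤ 2 * M n f * M (n + 2) f := by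
  have hsq (t : ℝ) : iteratedDeriv (n + 1) f t ^ 2 ≤ 2 * M n f * M (n + 2) f := by
    simpa [Real.coe_toNNReal _ (unif_nonneg _), M] using sq_deriv_le_of_lipschitzWith
      (abs_le_unif hf.of_succ.exists_bound) (hasDerivAt_iteratedDeriv hf.2.2.1) hf.lipschitzWith_M t
  have hsup : M (n + 1) f ≤ √(2 * M n f * M (n + 2) f) :=
    ciSup_le fun t => Real.abs_le_sqrt (hsq t)
  exact (Real.le_sqrt (unif_nonneg _) ((sq_nonneg _).trans (hsq 0))).1 hsup

end MemL

/-! ### Reflected primitives -/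

/-- The primitive, vanishing at `0`, of the reflection `x ↦ u (L - x)`. On a quarter period
`[0, L]`, iterating this operator produces all the splines `ψ_s` up to translation
(`psi_add_mul`); the reflection is what makes a single recursion serve both parities of `s`. -/
noncomputable def reflPrimitive (L : ℝ) (u : ℝ → ℝ) (t : ℝ) : ℝ := ∫ x in (0 : ℝ)..t, u (L - x)

section ReflPrimitive

variable {L : ℝ} {u : ℝ → ℝ}

lemma reflPrimitive_eq_integral (L : ℝ) (u : ℝ → ℝ) (t : ℝ) :
    reflPrimitive L u t = ∫ x in (L - t)..L, u x := by
  rw [reflPrimitive, intervalIntegral.integral_comp_sub_left, sub_zero]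

@[simp]
lemma reflPrimitive_zero (L : ℝ) (u : ℝ → ℝ) : reflPrimitive L u 0 = 0 :=
  intervalIntegral.integral_same

lemma reflPrimitive_self (L : ℝ) (u : ℝ → ℝ) : reflPrimitive L u L = ∫ x in (0 : ℝ)..L, u x := by
  rw [reflPrimitive_eq_integral, sub_self]

lemma intervalIntegrable_reflect (hu : ∀ x y, IntervalIntegrable u volume x y) (x y : ℝ) :
    IntervalIntegrable (fun t => u (L - t)) volume x y := by
  simpa using (hu (L - x) (L - y)).comp_sub_left L

lemma continuous_reflPrimitive (hu : ∀ x y, IntervalIntegrable u volume x y) :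
    Continuous (reflPrimitive L u) :=
  intervalIntegral.continuous_primitive (intervalIntegrable_reflect hu) 0

lemma intervalIntegrable_iterate_reflPrimitive (hu : ∀ x y, IntervalIntegrable u volume x y)
    (s : ℕ) (x y : ℝ) : IntervalIntegrable ((reflPrimitive L)^[s] u) volume x y := by
  induction s generalizing x y with
  | zero => exact hu x y
  | succ s ih =>
    rw [Function.iterate_succ_apply']
    exact (continuous_reflPrimitive ih).intervalIntegrable x y

lemma continuous_iterate_reflPrimitive (hu : ∀ x y, IntervalIntegrable u volume x y) (s : ℕ) :
    Continuous ((reflPrimitive L)^[s + 1] u) := by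
  rw [Function.iterate_succ_apply']
  exact continuous_reflPrimitive (intervalIntegrable_iterate_reflPrimitive hu s)

lemma monotoneOn_reflPrimitive (hu : ∀ x y, IntervalIntegrable u volume x y)
    (hnonneg : ∀ x ∈ Set.Icc 0 L, 0 ≤ u x) : MonotoneOn (reflPrimitive L u) (Set.Icc 0 L) := by
  intro t ht t' ht' htt'
  rw [← sub_nonneg, reflPrimitive, reflPrimitive, intervalIntegral.integral_interval_sub_left
    (intervalIntegrable_reflect hu _ _) (intervalIntegrable_reflect hu _ _)]
  exact intervalIntegral.integral_nonneg htt' fun x hx =>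
    hnonneg _ ⟨by linarith [hx.2, ht'.2], by linarith [hx.1, ht.1]⟩

lemma reflPrimitive_nonneg (hnonneg : ∀ x ∈ Set.Icc 0 L, 0 ≤ u x) (t : ℝ)
    (ht : t ∈ Set.Icc 0 L) : 0 ≤ reflPrimitive L u t :=
  intervalIntegral.integral_nonneg ht.1 fun x hx =>
    hnonneg _ ⟨by linarith [hx.2, ht.2], by linarith [hx.1]⟩

lemma iterate_reflPrimitive_nonneg (hnonneg : ∀ x ∈ Set.Icc 0 L, 0 ≤ u x) (s : ℕ) (t : ℝ)
    (ht : t ∈ Set.Icc 0 L) : 0 ≤ (reflPrimitive L)^[s] u t := by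
  induction s generalizing t with
  | zero => exact hnonneg t ht
  | succ s ih =>
    rw [Function.iterate_succ_apply']
    exact reflPrimitive_nonneg ih t ht

lemma monotoneOn_iterate_reflPrimitive (hu : ∀ x y, IntervalIntegrable u volume x y)
    (hnonneg : ∀ x ∈ Set.Icc 0 L, 0 ≤ u x) (s : ℕ) :
    MonotoneOn ((reflPrimitive L)^[s + 1] u) (Set.Icc 0 L) := by
  rw [Function.iterate_succ_apply']
  exact monotoneOn_reflPrimitive (intervalIntegrable_iterate_reflPrimitive hu s)
    (iterate_reflPrimitive_nonneg hnonneg s)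

lemma eqOn_reflPrimitive {v : ℝ → ℝ} (huv : Set.EqOn u v (Set.Icc 0 L)) :
    Set.EqOn (reflPrimitive L u) (reflPrimitive L v) (Set.Icc 0 L) := by
  intro t ht
  refine intervalIntegral.integral_congr fun x hx => huv ?_
  rw [Set.uIcc_of_le ht.1] at hx
  exact ⟨by linarith [hx.2, ht.2], by linarith [hx.1]⟩

lemma eqOn_iterate_reflPrimitive {v : ℝ → ℝ} (huv : Set.EqOn u v (Set.Icc 0 L)) (s : ℕ) :
    Set.EqOn ((reflPrimitive L)^[s] u) ((reflPrimitive L)^[s] v) (Set.Icc 0 L) := by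
  induction s with
  | zero => exact huv
  | succ s ih =>
    rw [Function.iterate_succ_apply', Function.iterate_succ_apply']
    exact eqOn_reflPrimitive ih

lemma concaveOn_reflPrimitive (hcont : Continuous u) (hmono : MonotoneOn u (Set.Icc 0 L)) :
    ConcaveOn ℝ (Set.Icc 0 L) (reflPrimitive L u) := by
  have hderiv (t : ℝ) : HasDerivAt (reflPrimitive L u) (u (L - t)) t :=
    (Continuous.integral_hasStrictDerivAt (by fun_prop) 0 t).hasDerivAt
  refine AntitoneOn.concaveOn_of_deriv (convex_Icc 0 L)
    (fun t _ => (hderiv t).continuousAt.continuousWithinAt)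
    (fun t _ => (hderiv t).differentiableAt.differentiableWithinAt) ?_
  intro x hx y hy hxy
  rw [interior_Icc] at hx hy
  rw [(hderiv x).deriv, (hderiv y).deriv]
  exact hmono ⟨by linarith [hy.2], by linarith [hy.1]⟩ ⟨by linarith [hx.2], by linarith [hx.1]⟩
    (by linarith)

lemma div_mul_reflPrimitive_le (hcont : Continuous u) (hmono : MonotoneOn u (Set.Icc 0 L))
    {t : ℝ} (ht : t ∈ Set.Icc 0 L) (hL : 0 < L) :
    t / L * reflPrimitive L u L ≤ reflPrimitive L u t := by
  have hratio : t / L ≤ 1 := (div_le_one hL).2 ht.2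
  have := (concaveOn_reflPrimitive hcont hmono).2 (Set.left_mem_Icc.2 hL.le)
    (Set.right_mem_Icc.2 hL.le) (sub_nonneg.2 hratio) (div_nonneg ht.1 hL.le) (sub_add_cancel _ _)
  simpa [hL.ne'] using this

lemma half_mul_reflPrimitive_le (hcont : Continuous u) (hmono : MonotoneOn u (Set.Icc 0 L))
    (hL : 0 < L) : L / 2 * reflPrimitive L u L ≤ reflPrimitive L (reflPrimitive L u) L := by
  calc L / 2 * reflPrimitive L u L
      = ∫ t in (0 : ℝ)..L, t / L * reflPrimitive L u L := by
        rw [intervalIntegral.integral_mul_const, intervalIntegral.integral_div, integral_id]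
        field_simp
        ring
    _ ≤ ∫ t in (0 : ℝ)..L, reflPrimitive L u t :=
        intervalIntegral.integral_mono_on hL.le
          (Continuous.intervalIntegrable (by fun_prop) _ _)
          ((continuous_reflPrimitive hcont.intervalIntegrable).intervalIntegrable _ _)
          fun t ht => div_mul_reflPrimitive_le hcont hmono ht hL
    _ = reflPrimitive L (reflPrimitive L u) L := (reflPrimitive_self _ _).symm

lemma reflPrimitive_reflPrimitive_self (hu : ∀ x y, IntervalIntegrable u volume x y) :
    reflPrimitive L (reflPrimitive L u) L = ∫ x in (0 : ℝ)..L, x * u x := by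
  have hw := intervalIntegrable_reflect (L := L) hu
  have hac : AbsolutelyContinuousOnInterval (reflPrimitive L u) 0 L :=
    (hw 0 L).absolutelyContinuousOnInterval_intervalIntegral Set.left_mem_uIcc
  have hlin : AbsolutelyContinuousOnInterval (fun x : ℝ => x - L) 0 L :=
    (contDiff_id.sub contDiff_const).contDiffOn.absolutelyContinuousOnInterval
  have hderiv : ∀ᵐ x, x ∈ Set.uIoc 0 L →
      deriv (reflPrimitive L u) x * (x - L) = -((L - x) * u (L - x)) := by
    filter_upwards [(hw 0 L).ae_hasDerivAt_integral] with x hx hmem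
    rw [show deriv (reflPrimitive L u) x = u (L - x) from
      (hx (Set.uIoc_subset_uIcc hmem) 0 Set.left_mem_uIcc).deriv]
    ring
  have hparts := hac.integral_mul_deriv_eq_deriv_mul hlin
  simp only [deriv_sub_const, deriv_id'', mul_one, sub_self, mul_zero, reflPrimitive_zero,
    zero_mul, zero_sub] at hparts
  rw [reflPrimitive_self, hparts, intervalIntegral.integral_congr_ae hderiv,
    intervalIntegral.integral_neg, neg_neg,
    intervalIntegral.integral_comp_sub_left (fun x => x * u x), sub_self, sub_zero]

end ReflPrimitive

/-- The value at `L` of the `s`-fold reflected primitive of `h` over `[0, L]`. For the step function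
`h = psiBase a b`, `L = a + b + c` and `s ≥ 1` this is the uniform norm of `ψ_s(a,b,c)`
(`unif_psi_succ`). -/
noncomputable def peak (h : ℝ → ℝ) (s : ℕ) (L : ℝ) : ℝ := (reflPrimitive L)^[s] h L

section Peak

variable {h : ℝ → ℝ} {L δ : ℝ}

lemma peak_succ (h : ℝ → ℝ) (s : ℕ) (L : ℝ) :
    peak h (s + 1) L = reflPrimitive L ((reflPrimitive L)^[s] h) L :=
  congrFun (Function.iterate_succ_apply' _ _ _) L

lemma peak_one (h : ℝ → ℝ) (L : ℝ) : peak h 1 L = ∫ x in (0 : ℝ)..L, h x :=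
  reflPrimitive_self L h

lemma peak_two (hint : ∀ x y, IntervalIntegrable h volume x y) (L : ℝ) :
    peak h 2 L = ∫ x in (0 : ℝ)..L, x * h x :=
  reflPrimitive_reflPrimitive_self hint

lemma continuous_uncurry_iterate_reflPrimitive (hint : ∀ x y, IntervalIntegrable h volume x y)
    (s : ℕ) : Continuous fun p : ℝ × ℝ => (reflPrimitive p.1)^[s + 1] h p.2 := by
  induction s with
  | zero =>
    have hprim := intervalIntegral.continuous_primitive hint 0
    have heq (p : ℝ × ℝ) : (reflPrimitive p.1)^[0 + 1] h p.2 =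
        (∫ x in (0 : ℝ)..p.1, h x) - ∫ x in (0 : ℝ)..(p.1 - p.2), h x := by
      rw [intervalIntegral.integral_interval_sub_left (hint _ _) (hint _ _)]
      exact reflPrimitive_eq_integral _ _ _
    simp only [heq]
    exact (hprim.comp continuous_fst).sub (hprim.comp (continuous_fst.sub continuous_snd))
  | succ s ih =>
    simp only [Function.iterate_succ_apply' _ (s + 1)]
    refine intervalIntegral.continuous_parametric_intervalIntegral_of_continuous (μ := volume)
      (f := fun p x => (reflPrimitive p.1)^[s + 1] h (p.1 - x)) ?_ continuous_snd
    exact ih.comp (by fun_prop : Continuous fun q : (ℝ × ℝ) × ℝ => (q.1.1, q.1.1 - q.2))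

lemma continuous_peak_succ (hint : ∀ x y, IntervalIntegrable h volume x y) (s : ℕ) :
    Continuous (peak h (s + 1)) :=
  (continuous_uncurry_iterate_reflPrimitive hint s).comp (continuous_id.prodMk continuous_id)

lemma pow_mul_peak_two_le (hint : ∀ x y, IntervalIntegrable h volume x y)
    (hnonneg : ∀ x ∈ Set.Icc 0 L, 0 ≤ h x) (hL : 0 < L) (s : ℕ) :
    (L / 2) ^ s * peak h 2 L ≤ peak h (s + 2) L := by
  induction s with
  | zero => simp
  | succ s ih =>
    have hstep : L / 2 * peak h (s + 2) L ≤ peak h (s + 3) L := by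
      rw [peak_succ h (s + 1), peak_succ h (s + 2), Function.iterate_succ_apply' _ (s + 1)]
      exact half_mul_reflPrimitive_le (continuous_iterate_reflPrimitive hint s)
        (monotoneOn_iterate_reflPrimitive hint hnonneg s) hL
    calc (L / 2) ^ (s + 1) * peak h 2 L = L / 2 * ((L / 2) ^ s * peak h 2 L) := by ring
      _ ≤ L / 2 * peak h (s + 2) L := mul_le_mul_of_nonneg_left ih (by positivity)
      _ ≤ peak h (s + 3) L := hstep

lemma tendsto_peak_atTop (hint : ∀ x y, IntervalIntegrable h volume x y)
    (hnonneg : ∀ x, 0 ≤ x → 0 ≤ h x) {m : ℝ} (hm : 0 < m)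
    (hpeak : ∀ᶠ L in atTop, m ≤ peak h 2 L) (s : ℕ) : Tendsto (peak h (s + 3)) atTop atTop := by
  have hpow : Tendsto (fun L : ℝ => (L / 2) ^ (s + 1) * m) atTop atTop :=
    ((tendsto_pow_atTop s.succ_ne_zero).comp
      (tendsto_id.atTop_div_const two_pos)).atTop_mul_const hm
  refine tendsto_atTop_mono' _ ?_ hpow
  filter_upwards [hpeak, eventually_gt_atTop 0] with L hL hpos
  exact (mul_le_mul_of_nonneg_left hL (by positivity)).trans
    (pow_mul_peak_two_le hint (fun x hx => hnonneg x hx.1) hpos (s + 1))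

lemma iterate_reflPrimitive_pos (hint : ∀ x y, IntervalIntegrable h volume x y)
    (hnonneg : ∀ x ∈ Set.Icc 0 L, 0 ≤ h x) (hpeak : 0 < peak h 2 L) (s : ℕ) {t : ℝ}
    (ht : t ∈ Set.Ioc 0 L) : 0 < (reflPrimitive L)^[s + 2] h t := by
  have hL : 0 < L := ht.1.trans_le ht.2
  have hend : 0 < peak h (s + 2) L :=
    (mul_pos (pow_pos (half_pos hL) s) hpeak).trans_le (pow_mul_peak_two_le hint hnonneg hL s)
  rw [peak_succ] at hend
  rw [Function.iterate_succ_apply']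
  exact (mul_pos (div_pos ht.1 hL) hend).trans_le
    (div_mul_reflPrimitive_le (continuous_iterate_reflPrimitive hint s)
      (monotoneOn_iterate_reflPrimitive hint hnonneg s) ⟨ht.1.le, ht.2⟩ hL)

lemma reflPrimitive_add_integral_le {u v : ℝ → ℝ} (hu : ∀ x y, IntervalIntegrable u volume x y)
    (hv : ∀ x y, IntervalIntegrable v volume x y) (huv : ∀ x ∈ Set.Icc 0 L, u x ≤ v (x + δ))
    {t : ℝ} (ht : t ∈ Set.Icc 0 L) :
    reflPrimitive L u t + (∫ x in (L - t)..(L - t + δ), v x) ≤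
      reflPrimitive (L + δ) v (t + δ) := by
  have hsplit : reflPrimitive (L + δ) v (t + δ) =
      (∫ x in (L - t)..L, v (x + δ)) + ∫ x in (L - t)..(L - t + δ), v x := by
    rw [reflPrimitive_eq_integral, add_sub_add_right_eq_sub,
      intervalIntegral.integral_comp_add_right, add_comm (∫ _ in _.._, _),
      intervalIntegral.integral_add_adjacent_intervals (hv _ _) (hv _ _)]
  rw [hsplit, reflPrimitive_eq_integral]
  gcongr
  refine intervalIntegral.integral_mono_on (by linarith [ht.1]) (hu _ _)
    (by simpa using (hv (L - t + δ) (L + δ)).comp_add_right δ) fun x hx => huv x ?_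
  exact ⟨(sub_nonneg.2 ht.2).trans hx.1, hx.2⟩

lemma iterate_reflPrimitive_le_add (hint : ∀ x y, IntervalIntegrable h volume x y) (hδ : 0 ≤ δ)
    (hnonneg : ∀ x ∈ Set.Icc 0 (L + δ), 0 ≤ h x) (s : ℕ) {t : ℝ} (ht : t ∈ Set.Icc 0 L) :
    (reflPrimitive L)^[s + 1] h t ≤ (reflPrimitive (L + δ))^[s + 1] h (t + δ) := by
  induction s generalizing t with
  | zero =>
    have hsplit : reflPrimitive (L + δ) h (t + δ) =
        reflPrimitive L h t + ∫ x in L..(L + δ), h x := by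
      rw [reflPrimitive_eq_integral, reflPrimitive_eq_integral, add_sub_add_right_eq_sub,
        intervalIntegral.integral_add_adjacent_intervals (hint _ _) (hint _ _)]
    have hextra : 0 ≤ ∫ x in L..(L + δ), h x :=
      intervalIntegral.integral_nonneg (by linarith) fun x hx =>
        hnonneg x ⟨(ht.1.trans ht.2).trans hx.1, hx.2⟩
    exact (le_add_of_nonneg_right hextra).trans_eq hsplit.symm
  | succ s ih =>
    have hextra : 0 ≤ ∫ x in (L - t)..(L - t + δ), (reflPrimitive (L + δ))^[s + 1] h x :=
      intervalIntegral.integral_nonneg (by linarith) fun x hx =>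
        iterate_reflPrimitive_nonneg hnonneg _ x
          ⟨(sub_nonneg.2 ht.2).trans hx.1, by linarith [hx.2, ht.1]⟩
    rw [Function.iterate_succ_apply', Function.iterate_succ_apply' _ (s + 1)]
    exact (le_add_of_nonneg_right hextra).trans (reflPrimitive_add_integral_le
      (intervalIntegrable_iterate_reflPrimitive hint _)
      (intervalIntegrable_iterate_reflPrimitive hint _) (fun x hx => ih hx) ht)

lemma peak_lt_peak_add (hint : ∀ x y, IntervalIntegrable h volume x y) (hL : 0 ≤ L) (hδ : 0 < δ)
    (hnonneg : ∀ x ∈ Set.Icc 0 (L + δ), 0 ≤ h x) (hpeak : 0 < peak h 2 (L + δ)) (s : ℕ) :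
    peak h (s + 3) L < peak h (s + 3) (L + δ) := by
  have hcmp := reflPrimitive_add_integral_le
    (intervalIntegrable_iterate_reflPrimitive (L := L) hint (s + 2))
    (intervalIntegrable_iterate_reflPrimitive (L := L + δ) hint (s + 2))
    (fun x hx => iterate_reflPrimitive_le_add hint hδ.le hnonneg (s + 1) hx)
    (Set.right_mem_Icc.2 hL)
  have hextra : 0 < ∫ x in (L - L)..(L - L + δ), (reflPrimitive (L + δ))^[s + 2] h x := by
    rw [sub_self, zero_add]
    exact intervalIntegral.intervalIntegral_pos_of_pos_on
      (intervalIntegrable_iterate_reflPrimitive hint _ _ _)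
      (fun x hx => iterate_reflPrimitive_pos hint hnonneg hpeak s ⟨hx.1, by linarith [hx.2]⟩) hδ
  rw [peak_succ, peak_succ]
  exact (lt_add_of_pos_right _ hextra).trans_le hcmp

end Peak

/-! ### Odd functions symmetric about `L` -/

/-- `u` is odd and symmetric about `L`, as `sin` is for `L = π / 2`: it is determined by its values
on the quarter period `[0, L]`. -/
structure IsQuarterWave (L : ℝ) (u : ℝ → ℝ) : Prop where
  odd : Function.Odd u
  symm : ∀ t, u (2 * L - t) = u t

namespace IsQuarterWave

variable {L : ℝ} {u : ℝ → ℝ}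

lemma antiperiodic (hu : IsQuarterWave L u) : Function.Antiperiodic u (2 * L) := fun t => by
  rw [← hu.odd t, ← hu.symm (-t), sub_neg_eq_add, add_comm]

lemma comp_add_left (hu : IsQuarterWave L u) (t : ℝ) : u (L + t) = u (L - t) := by
  rw [← hu.symm]
  congr 1
  ring

lemma integral_neg_self (hu : IsQuarterWave L u) (t : ℝ) : ∫ x in -t..t, u x = 0 := by
  have hneg : ∫ x in -t..t, u (-x) = ∫ x in -t..t, u x := by
    rw [intervalIntegral.integral_comp_neg, neg_neg]
  simp only [hu.odd _, intervalIntegral.integral_neg] at hneg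
  linarith

protected lemma reflPrimitive (hu : IsQuarterWave L u)
    (hint : ∀ x y, IntervalIntegrable u volume x y) : IsQuarterWave L (reflPrimitive L u) where
  odd t := by
    have hneg : ∫ x in (0 : ℝ)..t, u (L - -x) = ∫ x in (-t)..0, u (L - x) := by
      rw [intervalIntegral.integral_comp_neg (fun x => u (L - x)), neg_zero]
    simp only [sub_neg_eq_add, hu.comp_add_left] at hneg
    exact (intervalIntegral.integral_symm _ _).trans (congrArg Neg.neg hneg.symm)
  symm t := by
    rw [← sub_eq_zero, reflPrimitive, reflPrimitive,
      intervalIntegral.integral_interval_sub_left (intervalIntegrable_reflect hint _ _)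
        (intervalIntegrable_reflect hint _ _), intervalIntegral.integral_comp_sub_left]
    convert hu.integral_neg_self (L - t) using 2
    ring

lemma iterate_reflPrimitive (hu : IsQuarterWave L u)
    (hint : ∀ x y, IntervalIntegrable u volume x y) (s : ℕ) :
    IsQuarterWave L ((reflPrimitive L)^[s] u) := by
  induction s with
  | zero => exact hu
  | succ s ih =>
    rw [Function.iterate_succ_apply']
    exact ih.reflPrimitive (intervalIntegrable_iterate_reflPrimitive hint s)

lemma reflPrimitive_eq_integral_add (hu : IsQuarterWave L u) (t : ℝ) :
    reflPrimitive L u t = ∫ x in L..(t + L), u x := by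
  simp only [reflPrimitive, ← hu.comp_add_left]
  rw [intervalIntegral.integral_comp_add_left, add_zero, add_comm]

lemma exists_mem_Icc_abs_eq (hu : IsQuarterWave L u) (hL : 0 < L) (t : ℝ) :
    ∃ x ∈ Set.Icc 0 L, |u t| = |u x| := by
  have habs : Function.Periodic (fun t => |u t|) (2 * L) := fun t => by
    simp only [hu.antiperiodic t, abs_neg]
  obtain ⟨y, hy, hty⟩ := habs.exists_mem_Ico₀ (mul_pos two_pos hL) t
  rcases le_total y L with hyL | hyL
  · exact ⟨y, ⟨hy.1, hyL⟩, hty⟩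
  · exact ⟨2 * L - y, ⟨by linarith [hy.2], by linarith⟩, by rw [hu.symm]; exact hty⟩

lemma unif_eq (hu : IsQuarterWave L u) (hL : 0 < L) (hmono : MonotoneOn u (Set.Icc 0 L)) :
    unif u = u L := by
  have hzero : u 0 = 0 := hu.odd.map_zero
  have hnonneg (x : ℝ) (hx : x ∈ Set.Icc 0 L) : 0 ≤ u x :=
    hzero ▸ hmono (Set.left_mem_Icc.2 hL.le) hx hx.1
  have hright : L ∈ Set.Icc 0 L := Set.right_mem_Icc.2 hL.le
  refine unif_eq_of_forall_le (t₀ := L) (fun t => ?_) (abs_of_nonneg (hnonneg L hright))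
  obtain ⟨x, hx, htx⟩ := hu.exists_mem_Icc_abs_eq hL t
  rw [htx, abs_of_nonneg (hnonneg x hx)]
  exact hmono hx hright hx.2

end IsQuarterWave

lemma integral_two_mul_eq_zero_of_antiperiodic {u : ℝ → ℝ} {p : ℝ}
    (hu : Function.Antiperiodic u p) : ∫ x in (0 : ℝ)..(2 * p), u x = 0 := by
  have hperiod := hu.periodic_two_mul.intervalIntegral_add_eq p 0
  have hshift : ∫ x in (0 : ℝ)..(2 * p), u (x + p) = ∫ x in p..(p + 2 * p), u x := by
    rw [intervalIntegral.integral_comp_add_right, zero_add, add_comm]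
  simp only [hu _, intervalIntegral.integral_neg] at hshift
  rw [zero_add] at hperiod
  linarith

lemma primitive_sub_mean_eq_of_antiperiodic {w : ℝ → ℝ} {p d : ℝ} (hp : p ≠ 0)
    (hint : ∀ x y, IntervalIntegrable w volume x y)
    (hanti : Function.Antiperiodic (fun t => ∫ x in d..t, w x) p) (t : ℝ) :
    (∫ x in (0 : ℝ)..t, w x) - 1 / (2 * p) * ∫ x in (0 : ℝ)..(2 * p), ∫ y in (0 : ℝ)..x, w y =
      ∫ x in d..t, w x := by
  have hbase (x : ℝ) : ∫ y in (0 : ℝ)..x, w y = (∫ y in d..x, w y) - ∫ y in d..0, w y :=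
    (intervalIntegral.integral_interval_sub_left (hint _ _) (hint _ _)).symm
  have hmean : ∫ x in (0 : ℝ)..(2 * p), ∫ y in (0 : ℝ)..x, w y =
      -(2 * p * ∫ y in d..0, w y) := by
    simp only [hbase]
    rw [intervalIntegral.integral_sub
      ((intervalIntegral.continuous_primitive hint d).intervalIntegrable _ _)
      intervalIntegrable_const, integral_two_mul_eq_zero_of_antiperiodic hanti]
    simp
  rw [hmean, hbase]
  field_simp
  ring

/-! ### The step functions -/

section StepFunction

variable {a b c : ℝ}

lemma psiBase_eq_indicator (a b : ℝ) : psiBase a b = Set.indicator (Set.Ioc a (a + b)) 1 := by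
  funext t
  simp only [psiBase, Set.indicator, Set.mem_Ioc, Pi.one_apply]
  grind

lemma psiBase_nonneg (a b t : ℝ) : 0 ≤ psiBase a b t := by
  rw [psiBase_eq_indicator]
  exact Set.indicator_nonneg (fun _ _ => zero_le_one) t

lemma abs_psiBase_le_one (a b t : ℝ) : |psiBase a b t| ≤ 1 := by
  unfold psiBase
  split_ifs <;> norm_num

lemma measurable_psiBase (a b : ℝ) : Measurable (psiBase a b) := by
  rw [psiBase_eq_indicator]
  exact measurable_one.indicator measurableSet_Ioc

lemma intervalIntegrable_of_abs_le {u : ℝ → ℝ} {C : ℝ} (hmeas : Measurable u)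
    (hle : ∀ t, |u t| ≤ C) (x y : ℝ) : IntervalIntegrable u volume x y :=
  (intervalIntegrable_const (c := C)).mono_fun' hmeas.aestronglyMeasurable (ae_of_all _ hle)

lemma intervalIntegrable_psiBase (a b x y : ℝ) : IntervalIntegrable (psiBase a b) volume x y :=
  intervalIntegrable_of_abs_le (measurable_psiBase a b) (abs_psiBase_le_one a b) x y

lemma integral_mul_psiBase (ha : 0 ≤ a) (hb : 0 ≤ b) (hc : 0 ≤ c) (u : ℝ → ℝ) :
    ∫ x in (0 : ℝ)..(a + b + c), u x * psiBase a b x = ∫ x in a..(a + b), u x := by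
  have hmul (x : ℝ) : u x * psiBase a b x = Set.indicator (Set.Ioc a (a + b)) u x := by
    simp [psiBase_eq_indicator, Set.indicator]
  simp only [hmul]
  rw [intervalIntegral.integral_of_le (by linarith), intervalIntegral.integral_of_le (by linarith),
    setIntegral_indicator measurableSet_Ioc,
    Set.inter_eq_right.2 (Set.Ioc_subset_Ioc ha (by linarith))]

lemma peak_psiBase_one (ha : 0 ≤ a) (hb : 0 ≤ b) (hc : 0 ≤ c) :
    peak (psiBase a b) 1 (a + b + c) = b := by
  simpa [peak_one] using integral_mul_psiBase ha hb hc 1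

lemma peak_psiBase_two (ha : 0 ≤ a) (hb : 0 ≤ b) (hc : 0 ≤ c) :
    peak (psiBase a b) 2 (a + b + c) = b * (a + b / 2) := by
  rw [peak_two (intervalIntegrable_psiBase a b), integral_mul_psiBase ha hb hc, integral_id]
  ring

lemma abs_psiZero_le_one (a b c t : ℝ) : |psiZero a b c t| ≤ 1 := by
  unfold psiZero psiHalf
  split_ifs <;> simp only [abs_neg, abs_psiBase_le_one]

lemma measurable_psiZero (a b c : ℝ) : Measurable (psiZero a b c) := by
  have hhalf : Measurable (psiHalf a b c) :=
    Measurable.ite measurableSet_Iic (measurable_psiBase a b)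
      ((measurable_psiBase a b).comp (by fun_prop))
  have hmod : Measurable fun t : ℝ => t - 4 * (a + b + c) * (⌊t / (4 * (a + b + c))⌋ : ℝ) := by
    fun_prop
  exact Measurable.ite (measurableSet_le hmod measurable_const) (hhalf.comp hmod)
    (hhalf.comp (measurable_const.sub hmod)).neg

lemma intervalIntegrable_psiZero (a b c x y : ℝ) :
    IntervalIntegrable (psiZero a b c) volume x y :=
  intervalIntegrable_of_abs_le (measurable_psiZero a b c) (abs_psiZero_le_one a b c) x y

lemma psiHalf_two_mul_sub (a b c t : ℝ) :
    psiHalf a b c (2 * (a + b + c) - t) = psiHalf a b c t := by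
  rcases lt_trichotomy t (a + b + c) with h | rfl | h
  · rw [psiHalf, psiHalf, if_neg (by linarith), if_pos h.le, sub_sub_cancel]
  · rw [two_mul, add_sub_cancel_right]
  · rw [psiHalf, psiHalf, if_pos (by linarith), if_neg h.not_ge]

lemma psiHalf_zero (ha : 0 ≤ a) (hL : 0 ≤ a + b + c) : psiHalf a b c 0 = 0 := by
  simp only [psiHalf, psiBase, if_pos hL, if_pos ha]

lemma periodic_psiZero (hL : 0 < a + b + c) :
    Function.Periodic (psiZero a b c) (4 * (a + b + c)) := by
  intro t
  have hmod : t + 4 * (a + b + c) -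
        4 * (a + b + c) * ⌊(t + 4 * (a + b + c)) / (4 * (a + b + c))⌋ =
      t - 4 * (a + b + c) * ⌊t / (4 * (a + b + c))⌋ := by
    rw [add_div, div_self (by positivity), Int.floor_add_one]
    push_cast
    ring
  simp only [psiZero, hmod]

lemma psiZero_of_mem_Ico {t : ℝ} (ht : t ∈ Set.Ico 0 (4 * (a + b + c))) :
    psiZero a b c t = if t ≤ 2 * (a + b + c) then psiHalf a b c t
      else -psiHalf a b c (4 * (a + b + c) - t) := by
  have hP : 0 < 4 * (a + b + c) := ht.1.trans_lt ht.2
  have hfloor : ⌊t / (4 * (a + b + c))⌋ = 0 :=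
    Int.floor_eq_zero_iff.2 ⟨div_nonneg ht.1 hP.le, (div_lt_one hP).2 ht.2⟩
  simp only [psiZero, hfloor, Int.cast_zero, mul_zero, sub_zero]

lemma psiZero_eq_psiHalf (hL : 0 < a + b + c) {t : ℝ} (ht : t ∈ Set.Icc 0 (2 * (a + b + c))) :
    psiZero a b c t = psiHalf a b c t := by
  rw [psiZero_of_mem_Ico ⟨ht.1, by linarith [ht.2]⟩, if_pos ht.2]

lemma psiZero_eq_neg_psiHalf (ha : 0 ≤ a) (hL : 0 < a + b + c) {t : ℝ}
    (ht : t ∈ Set.Icc (2 * (a + b + c)) (4 * (a + b + c))) :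
    psiZero a b c t = -psiHalf a b c (4 * (a + b + c) - t) := by
  have hzero := psiHalf_zero ha hL.le
  rcases ht.2.eq_or_lt with rfl | htop
  · rw [← zero_add (4 * (a + b + c)), periodic_psiZero hL, zero_add, sub_self,
      psiZero_eq_psiHalf hL ⟨le_rfl, by linarith⟩, hzero, neg_zero]
  rcases ht.1.eq_or_lt with rfl | hbot
  · have htwo : psiHalf a b c (2 * (a + b + c)) = 0 := by
      rw [← psiHalf_two_mul_sub, sub_self, hzero]
    rw [psiZero_eq_psiHalf hL ⟨by linarith, le_rfl⟩, ← sub_mul]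
    norm_num [htwo]
  · rw [psiZero_of_mem_Ico ⟨by linarith, htop⟩, if_neg hbot.not_ge]

lemma eqOn_psiZero_psiBase (hL : 0 < a + b + c) :
    Set.EqOn (psiZero a b c) (psiBase a b) (Set.Icc 0 (a + b + c)) := fun t ht => by
  rw [psiZero_eq_psiHalf hL ⟨ht.1, by linarith [ht.2]⟩, psiHalf, if_pos ht.2]

lemma eq_of_periodic_of_eqOn_Ico {u v : ℝ → ℝ} {P : ℝ} (hP : 0 < P) (hu : Function.Periodic u P)
    (hv : Function.Periodic v P) (huv : Set.EqOn u v (Set.Ico 0 P)) : u = v := by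
  funext t
  have hpair : Function.Periodic (fun t => (u t, v t)) P := fun t => by simp only [hu t, hv t]
  obtain ⟨y, hy, hty⟩ := hpair.exists_mem_Ico₀ hP t
  obtain ⟨huy, hvy⟩ := Prod.mk.inj hty
  rw [huy, hvy, huv hy]

lemma odd_psiZero (ha : 0 ≤ a) (hL : 0 < a + b + c) : Function.Odd (psiZero a b c) := by
  have hper := periodic_psiZero hL
  refine congrFun (eq_of_periodic_of_eqOn_Ico (by positivity : 0 < 4 * (a + b + c))
    (fun t => ?_) (fun t => congrArg Neg.neg (hper t)) fun t ht => ?_)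
  · rw [← hper, neg_add, neg_add_cancel_right]
  rw [← hper, neg_add_eq_sub]
  rcases le_total t (2 * (a + b + c)) with h | h
  · rw [psiZero_eq_neg_psiHalf ha hL ⟨by linarith, by linarith [ht.1]⟩,
      psiZero_eq_psiHalf hL ⟨ht.1, h⟩, sub_sub_cancel]
  · rw [psiZero_eq_psiHalf hL ⟨by linarith [ht.2], by linarith⟩,
      psiZero_eq_neg_psiHalf ha hL ⟨h, ht.2.le⟩, neg_neg]

lemma psiZero_two_mul_sub (ha : 0 ≤ a) (hL : 0 < a + b + c) (t : ℝ) :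
    psiZero a b c (2 * (a + b + c) - t) = psiZero a b c t := by
  have hper := periodic_psiZero hL
  refine congrFun (eq_of_periodic_of_eqOn_Ico (by positivity : 0 < 4 * (a + b + c))
    (u := fun t => psiZero a b c (2 * (a + b + c) - t)) (fun t => ?_) hper fun t ht => ?_) t
  · simp only [sub_add_eq_sub_sub, hper.sub_eq]
  dsimp only
  rcases le_total t (2 * (a + b + c)) with h | h
  · rw [psiZero_eq_psiHalf hL ⟨by linarith, by linarith [ht.1]⟩,
      psiZero_eq_psiHalf hL ⟨ht.1, h⟩, psiHalf_two_mul_sub]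
  · rw [← hper, psiZero_eq_neg_psiHalf ha hL ⟨by linarith [ht.2], by linarith⟩,
      psiZero_eq_neg_psiHalf ha hL ⟨h, ht.2.le⟩, ← psiHalf_two_mul_sub]
    congr 2
    ring

lemma isQuarterWave_psiZero (ha : 0 ≤ a) (hL : 0 < a + b + c) :
    IsQuarterWave (a + b + c) (psiZero a b c) :=
  ⟨odd_psiZero ha hL, psiZero_two_mul_sub ha hL⟩

end StepFunction

/-! ### The splines `ψ_s` -/

section Psi

variable {a b c : ℝ}

lemma intervalIntegrable_psi (s : ℕ) (a b c x y : ℝ) :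
    IntervalIntegrable (psi s a b c) volume x y := by
  induction s generalizing x y with
  | zero => exact intervalIntegrable_psiZero a b c x y
  | succ s ih =>
    exact ((intervalIntegral.continuous_primitive ih 0).sub continuous_const).intervalIntegrable x y

lemma continuous_psi_succ (s : ℕ) (a b c : ℝ) : Continuous (psi (s + 1) a b c) :=
  (intervalIntegral.continuous_primitive (intervalIntegrable_psi s a b c) 0).sub continuous_const

lemma psi_add_mul (ha : 0 ≤ a) (hL : 0 < a + b + c) (s : ℕ) (t : ℝ) :
    psi s a b c (t + s * (a + b + c)) = (reflPrimitive (a + b + c))^[s] (psiZero a b c) t := by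
  induction s generalizing t with
  | zero => simp [psi]
  | succ s ih =>
    have hwave := (isQuarterWave_psiZero ha hL).iterate_reflPrimitive
      (intervalIntegrable_psiZero a b c)
    have hprim (t : ℝ) : ∫ x in ((s + 1 : ℕ) * (a + b + c))..(t + (s + 1 : ℕ) * (a + b + c)),
        psi s a b c x = (reflPrimitive (a + b + c))^[s + 1] (psiZero a b c) t := by
      rw [Function.iterate_succ_apply', (hwave s).reflPrimitive_eq_integral_add]
      simp only [← ih]
      rw [intervalIntegral.integral_comp_add_right]
      congr 1 <;> (push_cast; ring)
    have hanti : Function.Antiperiodic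
        (fun t => ∫ x in ((s + 1 : ℕ) * (a + b + c))..t, psi s a b c x) (2 * (a + b + c)) := by
      intro t
      have := (hwave (s + 1)).antiperiodic (t - (s + 1 : ℕ) * (a + b + c))
      rwa [← hprim, ← hprim, sub_add_cancel, add_right_comm (t - _), sub_add_cancel] at this
    have hmean := primitive_sub_mean_eq_of_antiperiodic (by positivity)
      (intervalIntegrable_psi s a b c) hanti (t + (s + 1 : ℕ) * (a + b + c))
    rw [hprim, ← mul_assoc] at hmean
    norm_num only at hmean
    exact_mod_cast hmean

lemma unif_psi_succ (ha : 0 ≤ a) (hL : 0 < a + b + c) (s : ℕ) :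
    unif (psi (s + 1) a b c) = peak (psiBase a b) (s + 1) (a + b + c) := by
  have heq := eqOn_psiZero_psiBase (b := b) (c := c) hL
  have hmono := monotoneOn_iterate_reflPrimitive (intervalIntegrable_psiZero a b c)
    (fun x hx => heq hx ▸ psiBase_nonneg a b x) s
  rw [← unif_comp_add_right _ ((s + 1 : ℕ) * (a + b + c))]
  simp only [psi_add_mul ha hL]
  rw [((isQuarterWave_psiZero ha hL).iterate_reflPrimitive
    (intervalIntegrable_psiZero a b c) (s + 1)).unif_eq hL hmono]
  exact eqOn_iterate_reflPrimitive heq (s + 1) (Set.right_mem_Icc.2 hL.le)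

lemma measurable_psi (s : ℕ) (a b c : ℝ) : Measurable (psi s a b c) := by
  cases s with
  | zero => exact measurable_psiZero a b c
  | succ s => exact (continuous_psi_succ s a b c).measurable

lemma hasDerivAt_psi_succ (s : ℕ) {t : ℝ} (hcont : ContinuousAt (psi s a b c) t) :
    HasDerivAt (psi (s + 1) a b c) (psi s a b c t) t :=
  (intervalIntegral.integral_hasDerivAt_right (intervalIntegrable_psi s a b c 0 t)
    (measurable_psi s a b c).stronglyMeasurable.stronglyMeasurableAtFilter hcont).sub_const _

lemma iteratedDeriv_psi (k s : ℕ) (a b c : ℝ) :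
    iteratedDeriv k (psi (s + k + 1) a b c) = psi (s + 1) a b c := by
  induction k with
  | zero => rfl
  | succ k ih =>
    have hderiv : deriv (psi (s + (k + 1) + 1) a b c) = psi (s + k + 1) a b c :=
      funext fun _ => (hasDerivAt_psi_succ _ (continuous_psi_succ _ a b c).continuousAt).deriv
    rw [iteratedDeriv_succ', hderiv, ih]

lemma M_psi (ha : 0 ≤ a) (hL : 0 < a + b + c) (k s : ℕ) :
    M k (psi (s + k + 1) a b c) = peak (psiBase a b) (s + 1) (a + b + c) := by
  rw [M, iteratedDeriv_psi, unif_psi_succ ha hL]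

lemma M_psi_add_one (ha : 0 ≤ a) (hb : 0 < b) (hc : 0 ≤ c) (k : ℕ) :
    M k (psi (k + 1) a b c) = b := by
  have hM := M_psi ha (by positivity : 0 < a + b + c) k 0
  rwa [zero_add, peak_psiBase_one ha hb.le hc] at hM

lemma M_psi_add_two (ha : 0 ≤ a) (hb : 0 < b) (hc : 0 ≤ c) (k : ℕ) :
    M k (psi (k + 2) a b c) = b * (a + b / 2) := by
  have hM := M_psi ha (by positivity : 0 < a + b + c) k 1
  rwa [add_comm 1 k, peak_psiBase_two ha hb.le hc] at hM

lemma lipschitzWith_psi_one (a b c : ℝ) : LipschitzWith 1 (psi 1 a b c) := by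
  refine LipschitzWith.of_dist_le_mul fun x y => ?_
  have hint := intervalIntegrable_psiZero a b c
  have hsub : psi 1 a b c x - psi 1 a b c y = ∫ t in y..x, psiZero a b c t := by
    rw [← intervalIntegral.integral_interval_sub_left (hint 0 x) (hint 0 y)]
    exact sub_sub_sub_cancel_right _ _ _
  rw [Real.dist_eq, Real.dist_eq, hsub]
  exact intervalIntegral.norm_integral_le_of_norm_le_const (f := psiZero a b c) fun t _ =>
    abs_psiZero_le_one a b c t

lemma deriv_psi_one (ha : 0 ≤ a) (hc : 0 ≤ c) {t : ℝ} (ht : t ∈ Set.Ioo a (a + b)) :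
    deriv (psi 1 a b c) t = 1 := by
  have hone (x : ℝ) (hx : x ∈ Set.Ioo a (a + b)) : psiZero a b c x = 1 := by
    have hL : 0 < a + b + c := by linarith [hx.1, hx.2]
    rw [eqOn_psiZero_psiBase hL ⟨by linarith [hx.1], by linarith [hx.2]⟩, psiBase,
      if_neg hx.1.not_ge, if_pos hx.2.le]
  have hloc : psiZero a b c =ᶠ[nhds t] fun _ => 1 :=
    Filter.mem_of_superset (isOpen_Ioo.mem_nhds ht) hone
  rw [← hone t ht]
  exact (hasDerivAt_psi_succ 0 (continuousAt_const.congr hloc.symm)).deriv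

lemma M_psi_self (ha : 0 ≤ a) (hb : 0 < b) (hc : 0 ≤ c) (k : ℕ) :
    M (k + 1) (psi (k + 1) a b c) = 1 := by
  have hiter := iteratedDeriv_psi k 0 a b c
  rw [zero_add] at hiter
  rw [M, iteratedDeriv_succ, hiter]
  refine unif_eq_of_forall_le (t₀ := a + b / 2) (fun t => ?_) ?_
  · exact_mod_cast norm_deriv_le_of_lipschitz (lipschitzWith_psi_one a b c)
  · rw [deriv_psi_one ha hc ⟨by linarith, by linarith⟩, abs_one]

end Psi

section PsiFamily

variable {a b : ℝ}

lemma eqOn_M_psi_peak (ha : 0 ≤ a) (hb : 0 < b) (k s : ℕ) :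
    Set.EqOn (fun β => M k (psi (s + k + 1) a b β))
      (fun β => peak (psiBase a b) (s + 1) (a + b + β)) (Set.Ici 0) :=
  fun _ hβ => M_psi ha (add_pos_of_pos_of_nonneg (by positivity) hβ) k s

lemma continuousOn_M_psi (ha : 0 ≤ a) (hb : 0 < b) (k s : ℕ) :
    ContinuousOn (fun β => M k (psi (s + k + 1) a b β)) (Set.Ici 0) :=
  ((continuous_peak_succ (intervalIntegrable_psiBase a b) s).comp
    (continuous_const_add (a + b))).continuousOn.congr (eqOn_M_psi_peak ha hb k s)

lemma strictMonoOn_M_psi (ha : 0 ≤ a) (hb : 0 < b) (k s : ℕ) :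
    StrictMonoOn (fun β => M k (psi (s + 2 + k + 1) a b β)) (Set.Ici 0) := by
  refine StrictMonoOn.congr (fun β hβ γ hγ hβγ => ?_) (eqOn_M_psi_peak ha hb k (s + 2)).symm
  have hpeak : 0 < peak (psiBase a b) 2 (a + b + γ) := by
    rw [peak_psiBase_two ha hb.le hγ]
    positivity
  rw [show a + b + γ = a + b + β + (γ - β) by ring] at hpeak ⊢
  exact peak_lt_peak_add (intervalIntegrable_psiBase a b)
    (add_nonneg (by positivity) hβ) (sub_pos.2 hβγ) (fun x _ => psiBase_nonneg a b x) hpeak s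

lemma tendsto_M_psi_atTop (ha : 0 ≤ a) (hb : 0 < b) (k s : ℕ) :
    Tendsto (fun β => M k (psi (s + 2 + k + 1) a b β)) atTop atTop := by
  have hpeak : ∀ᶠ L in atTop, b * (a + b / 2) ≤ peak (psiBase a b) 2 L := by
    filter_upwards [eventually_ge_atTop (a + b)] with L hL
    rw [← add_sub_cancel (a + b) L, peak_psiBase_two ha hb.le (sub_nonneg.2 hL)]
  have htendsto := (tendsto_peak_atTop (intervalIntegrable_psiBase a b)
    (fun x _ => psiBase_nonneg a b x) (by positivity) hpeak s).comp
    (tendsto_atTop_add_const_left atTop (a + b) tendsto_id)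
  refine htendsto.congr' ?_
  filter_upwards [eventually_ge_atTop 0] with β hβ
  exact (eqOn_M_psi_peak ha hb k (s + 2) hβ).symm

end PsiFamily

theorem stmt14_general (r : ℕ) (hr : 2 ≤ r) (f : ℝ → ℝ) (hf : MemL r f)
    (hnc : ∃ x y : ℝ, f x ≠ f y)
    (α b a : ℝ) (hα : α = M r f) (hb : b = M (r - 1) f / M r f)
    (ha : a = M (r - 2) f / M (r - 1) f - M (r - 1) f / (2 * M r f))
    (g : ℝ → ℝ → ℝ) (hg : g = fun β t => α * psi r a b β t) :
    0 ≤ a ∧ 0 < α ∧ 0 < b ∧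
    (∀ β : ℝ, 0 ≤ β → M (r - 2) (g β) = M (r - 2) f ∧
      M (r - 1) (g β) = M (r - 1) f ∧ M r (g β) = M r f) ∧
    (∀ s : ℕ, s < r - 2 →
      ContinuousOn (fun β => M s (g β)) (Set.Ici 0) ∧
      StrictMonoOn (fun β => M s (g β)) (Set.Ici 0) ∧
      Filter.Tendsto (fun β => M s (g β)) Filter.atTop Filter.atTop) := by
  obtain ⟨n, rfl⟩ := Nat.exists_eq_add_of_le' hr
  simp only [show n + 2 - 1 = n + 1 from rfl, Nat.add_sub_cancel] at hb ha ⊢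
  have hM₂ : 0 < M (n + 2) f := hf.M_pos hnc
  have hM₁ : 0 < M (n + 1) f := hf.of_succ.M_pos hnc
  have hα_pos : 0 < α := hα ▸ hM₂
  have hb_pos : 0 < b := hb ▸ div_pos hM₁ hM₂
  have ha_nonneg : 0 ≤ a := by
    rw [ha, sub_nonneg, div_le_div_iff₀ (by positivity) hM₁]
    linarith [hf.landau]
  have hM (k : ℕ) (β : ℝ) : M k (g β) = α * M k (psi (n + 2) a b β) := by
    rw [hg, M_const_mul, abs_of_pos hα_pos]
  simp only [hM]
  refine ⟨ha_nonneg, hα_pos, hb_pos, fun β hβ => ⟨?_, ?_, ?_⟩, fun s hs => ?_⟩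
  · rw [M_psi_add_two ha_nonneg hb_pos hβ, hα, ha, hb]
    field_simp
    ring
  · rw [M_psi_add_one ha_nonneg hb_pos hβ, hα, hb, mul_div_cancel₀ _ hM₂.ne']
  · rw [M_psi_self ha_nonneg hb_pos hβ, mul_one, hα]
  · obtain ⟨k, rfl⟩ := Nat.exists_eq_add_of_lt hs
    rw [show s + k + 1 + 2 = k + 2 + s + 1 by ring]
    exact ⟨continuousOn_const.mul (continuousOn_M_psi ha_nonneg hb_pos s (k + 2)),
      (strictMono_mul_left_of_pos hα_pos).comp_strictMonoOn
        (strictMonoOn_M_psi ha_nonneg hb_pos s k),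
      (tendsto_M_psi_atTop ha_nonneg hb_pos s k).const_mul_atTop hα_pos⟩

/-- The one-parameter spline family for `𝐤 = (0,k,r-2,r-1,r)`: for non-constant
`f ∈ L^r_{∞,∞}`, with `α = M_r(f)`, `b = M_{r-1}(f)/M_r(f)` and
`a = M_{r-2}(f)/M_{r-1}(f) - M_{r-1}(f)/(2 M_r(f))` one has `a ≥ 0`, and the splines
`g_β = α ψ_r(a,b,β)` match `M_{r-2}`, `M_{r-1}` and `M_r` of `f`, while for each
`s < r-2` the map `β ↦ M_s(g_β)` continuously increases to `∞`. -/
theorem stmt14 (r : ℕ) (hr : 4 ≤ r) (f : ℝ → ℝ) (hf : MemL r f)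
    (hnc : ∃ x y : ℝ, f x ≠ f y)
    (α b a : ℝ) (hα : α = M r f) (hb : b = M (r - 1) f / M r f)
    (ha : a = M (r - 2) f / M (r - 1) f - M (r - 1) f / (2 * M r f))
    (g : ℝ → ℝ → ℝ) (hg : g = fun β t => α * psi r a b β t) :
    0 ≤ a ∧ 0 < α ∧ 0 < b ∧
    (∀ β : ℝ, 0 ≤ β → M (r - 2) (g β) = M (r - 2) f ∧
      M (r - 1) (g β) = M (r - 1) f ∧ M r (g β) = M r f) ∧
    (∀ s : ℕ, s < r - 2 →
      ContinuousOn (fun β => M s (g β)) (Set.Ici 0) ∧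
      StrictMonoOn (fun β => M s (g β)) (Set.Ici 0) ∧
      Filter.Tendsto (fun β => M s (g β)) Filter.atTop Filter.atTop) :=
  stmt14_general r (by omega) f hf hnc α b a hα hb ha g hg
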